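/- For all integers v, k, t, y, s with 0 ≤ t ≤ k ≤ v, 0 ≤ s ≤ k+y, and y ≥ 0, the covering number satisfies the Morley–van Rees direct-product bound C(2v+y, v+k+y, t+s+1) ≤ C(v,k,t) + C(v+y, k+y, s). -/

import Mathlib

/-- A `(v,k,t)` covering design: a family of `k`-element subsets (blocks) of a
`v`-element set such that every `t`-element subset is contained in at least one block. -/
def IsCoverDesign (v k t : ℕ) (B : Finset (Finset (Fin v))) : Prop :=
  (∀ b ∈ B, b.card = k) ∧
  ∀ s : Finset (Fin v), s.card = t → ∃ b ∈ B, s ⊆ b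

/-- `coverNumber v k t` is `C(v,k,t)`, the minimum number of blocks in a
`(v,k,t)` covering design. -/
noncomputable def coverNumber (v k t : ℕ) : ℕ :=
  sInf {n : ℕ | ∃ B : Finset (Finset (Fin v)), IsCoverDesign v k t B ∧ B.card = n}

theorem exists_opt (v k t : ℕ) (htk : t ≤ k) (hkv : k ≤ v) :
    ∃ B : Finset (Finset (Fin v)), IsCoverDesign v k t B ∧ B.card = coverNumber v k t := by
  have h : {n : ℕ | ∃ B : Finset (Finset (Fin v)), IsCoverDesign v k t B ∧ B.card = n}.Nonempty := by
    refine ⟨_, Finset.powersetCard k Finset.univ, ⟨?_, ?_⟩, rfl⟩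
    · intro b hb
      exact (Finset.mem_powersetCard.1 hb).2
    · intro s hs
      obtain ⟨b, hb, hc⟩ := Finset.exists_superset_card_eq (s := s) (n := k) (by omega) (by simpa using hkv)
      exact ⟨b, Finset.mem_powersetCard.2 ⟨Finset.subset_univ _, hc⟩, hb⟩
  exact Nat.sInf_mem h

theorem cover_le {v k t : ℕ} {B : Finset (Finset (Fin v))} (hB : IsCoverDesign v k t B)
    (htv : t ≤ v) (T : Finset (Fin v)) (hT : T.card ≤ t) : ∃ b ∈ B, T ⊆ b := by
  obtain ⟨S, hS, hc⟩ := Finset.exists_superset_card_eq (s := T) (n := t) hT (by simpa using htv)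
  obtain ⟨b, hb, h⟩ := hB.2 S hc
  exact ⟨b, hb, hS.trans h⟩

/-- The Morley–van Rees direct-product bound:
`C(2v+y, v+k+y, t+s+1) ≤ C(v,k,t) + C(v+y,k+y,s)`. -/
theorem morley_van_rees (v k t y s : ℕ) (htk : t ≤ k) (hkv : k ≤ v) (hs : s ≤ k + y) :
    coverNumber (2 * v + y) (v + k + y) (t + s + 1) ≤
      coverNumber v k t + coverNumber (v + y) (k + y) s := by
  classical
  obtain ⟨B₁, h₁, c₁⟩ := exists_opt v k t htk hkv
  obtain ⟨B₂, h₂, c₂⟩ := exists_opt (v + y) (k + y) s hs (by omega)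
  rw [← c₁, ← c₂]
  let e : Fin v ⊕ Fin (v + y) ≃ Fin (2 * v + y) :=
    finSumFinEquiv.trans (finCongr (by omega))
  let f₁ : Finset (Fin v) → Finset (Fin (2 * v + y)) :=
    fun b => (b.disjSum Finset.univ).map e.toEmbedding
  let f₂ : Finset (Fin (v + y)) → Finset (Fin (2 * v + y)) :=
    fun b => ((Finset.univ : Finset (Fin v)).disjSum b).map e.toEmbedding
  have key : IsCoverDesign (2 * v + y) (v + k + y) (t + s + 1) (B₁.image f₁ ∪ B₂.image f₂) := by
    constructor
    · intro b hb
      rcases Finset.mem_union.1 hb with hb | hb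
      · obtain ⟨a, ha, rfl⟩ := Finset.mem_image.1 hb
        have := h₁.1 a ha
        simp only [f₁, Finset.card_map, Finset.card_disjSum, Finset.card_univ, Fintype.card_fin]
        omega
      · obtain ⟨a, ha, rfl⟩ := Finset.mem_image.1 hb
        have := h₂.1 a ha
        simp only [f₂, Finset.card_map, Finset.card_disjSum, Finset.card_univ, Fintype.card_fin]
        omega
    · intro T hT
      let U := T.map e.symm.toEmbedding
      have hU : U.toLeft.card + U.toRight.card = t + s + 1 := by
        rw [Finset.card_toLeft_add_card_toRight, Finset.card_map, hT]
      have hmem : ∀ x ∈ T, e.symm x ∈ U := fun x hx => Finset.mem_map_of_mem _ hx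
      by_cases hl : U.toLeft.card ≤ t
      · obtain ⟨b, hb, hsub⟩ := cover_le h₁ (by omega) _ hl
        refine ⟨f₁ b, Finset.mem_union_left _ (Finset.mem_image_of_mem _ hb), fun x hx => ?_⟩
        refine Finset.mem_map.2 ⟨e.symm x, ?_, by simp⟩
        have hx' := hmem x hx
        rcases h : e.symm x with a | a
        · rw [h] at hx'
          simpa using hsub (Finset.mem_toLeft.2 hx')
        · simp
      · obtain ⟨b, hb, hsub⟩ := cover_le h₂ (by omega) U.toRight (by omega)
        refine ⟨f₂ b, Finset.mem_union_right _ (Finset.mem_image_of_mem _ hb), fun x hx => ?_⟩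
        refine Finset.mem_map.2 ⟨e.symm x, ?_, by simp⟩
        have hx' := hmem x hx
        rcases h : e.symm x with a | a
        · simp
        · rw [h] at hx'
          simpa using hsub (Finset.mem_toRight.2 hx')
  have hle : coverNumber (2 * v + y) (v + k + y) (t + s + 1) ≤
      (B₁.image f₁ ∪ B₂.image f₂).card := Nat.sInf_le ⟨_, key, rfl⟩
  refine hle.trans ?_
  exact (Finset.card_union_le _ _).trans
    (Nat.add_le_add Finset.card_image_le Finset.card_image_le)
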